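/- arXiv:2603.02044 — 4 statements merged into one kernel-verified Lean document; each statement's English description precedes it below -/
import Mathlib

section
/- Let a, b > 0 and let f : ℝ → ℝ belong to L^2_{∞,∞}. If |f(t)| ≤ a for all t ∈ ℝ and |f''(t)| ≤ b for almost every t ∈ ℝ, then |f'(t)| ≤ √(2ab) for all t ∈ ℝ. -/
open MeasureTheory Filter

noncomputable section

/-- The uniform norm `‖f‖ = sup_{t ∈ ℝ} |f t|` of a function `f : ℝ → ℝ`. -/
def unif (f : ℝ → ℝ) : ℝ := ⨆ t : ℝ, |f t|

/-- `M k f = ‖f⁽ᵏ⁾‖`, the uniform norm of the `k`-th derivative of `f`. -/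
def M (k : ℕ) (f : ℝ → ℝ) : ℝ := unif (iteratedDeriv k f)

/-- The class `L^r_{∞,∞}`: bounded functions `f : ℝ → ℝ` having `r-1` (continuous)
derivatives, with `f⁽ʳ⁻¹⁾` locally absolutely continuous and `f⁽ʳ⁾` essentially bounded;
the last two conditions are equivalent to `f⁽ʳ⁻¹⁾` being Lipschitz. -/
def MemL (r : ℕ) (f : ℝ → ℝ) : Prop :=
  Continuous f ∧ (∃ C : ℝ, ∀ t : ℝ, |f t| ≤ C) ∧ ContDiff ℝ (r - 1 : ℕ) f ∧
    ∃ K : NNReal, LipschitzWith K (iteratedDeriv (r - 1) f)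

/-- The Euler perfect spline `φ_r`: the `r`-th `2π`-periodic antiderivative with zero
mean value of `t ↦ sgn (sin t)`. -/
def eulerPhi : ℕ → ℝ → ℝ
  | 0 => fun t => Real.sign (Real.sin t)
  | (s + 1) => fun t =>
      (∫ x in (0:ℝ)..t, eulerPhi s x) -
        (1 / (2 * Real.pi)) * ∫ x in (0:ℝ)..(2 * Real.pi), ∫ u in (0:ℝ)..x, eulerPhi s u

/-- `φ_{λ,r}(t) = λ^{-r} φ_r (λ t)`. -/
def eulerPhiL (lam : ℝ) (r : ℕ) (t : ℝ) : ℝ := lam ^ (-(r : ℤ)) * eulerPhi r (lam * t)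

/-- The basic step function: `0` on `[0,a]`, `1` on `(a, a+b]`, `0` after `a+b`. -/
def psiBase (a b : ℝ) (t : ℝ) : ℝ := if t ≤ a then 0 else if t ≤ a + b then 1 else 0

/-- `psiBase` continued evenly with respect to the point `a+b+c`. -/
def psiHalf (a b c t : ℝ) : ℝ :=
  if t ≤ a + b + c then psiBase a b t else psiBase a b (2 * (a + b + c) - t)

/-- The Rodov step function `ψ_0(a,b,c)`: equal to `psiBase` on `[0, a+b+c]`, continued
evenly with respect to `a+b+c`, then oddly with respect to `2(a+b+c)`, then
`4(a+b+c)`-periodically. -/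
def psiZero (a b c t : ℝ) : ℝ :=
  if (t - 4 * (a + b + c) * ⌊t / (4 * (a + b + c))⌋) ≤ 2 * (a + b + c) then
    psiHalf a b c (t - 4 * (a + b + c) * ⌊t / (4 * (a + b + c))⌋)
  else
    -psiHalf a b c (4 * (a + b + c) - (t - 4 * (a + b + c) * ⌊t / (4 * (a + b + c))⌋))

/-- `ψ_s(a,b,c)`: the `s`-th periodic antiderivative of `ψ_0(a,b,c)` with zero mean
value over the period `[0, 4(a+b+c)]`. -/
def psi : ℕ → ℝ → ℝ → ℝ → ℝ → ℝ
  | 0 => psiZero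
  | (s + 1) => fun a b c t =>
      (∫ x in (0:ℝ)..t, psi s a b c x) -
        (1 / (4 * (a + b + c))) *
          ∫ x in (0:ℝ)..(4 * (a + b + c)), ∫ u in (0:ℝ)..x, psi s a b c u

/-- The modulus of continuity `ω(D^k, X; δ) = sup {‖f⁽ᵏ⁾‖ : f ∈ X, ‖f‖ ≤ δ}` of the
differentiation operator `D^k` on a class `X`. -/
def omegaMod (k : ℕ) (X : Set (ℝ → ℝ)) (δ : ℝ) : ℝ :=
  sSup {y : ℝ | ∃ f ∈ X, M 0 f ≤ δ ∧ M k f = y}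

end

/-!
A Lipschitz constant `b` of `f'` bounds the first-order Taylor remainder of `f` at `t` by
`b / 2 * h ^ 2`. Subtracting the expansions of `f (t + h)` and `f (t - h)` gives
`2 * |h| * ‖f' t‖ ≤ ‖f (t + h)‖ + ‖f (t - h)‖ + b * h ^ 2 ≤ 2 * a + b * h ^ 2` for every real `h`,
so the discriminant of `b * h ^ 2 - 2 * ‖f' t‖ * h + 2 * a` is nonpositive, which is
`‖f' t‖ ^ 2 ≤ 2 * a * b`.
-/

theorem lipschitzWith_comp_absolutelyContinuousOnInterval {X Y : Type*} [PseudoMetricSpace X]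
    [PseudoMetricSpace Y] {K : NNReal} {φ : X → Y} {g : ℝ → X} {x y : ℝ} (hφ : LipschitzWith K φ)
    (hg : AbsolutelyContinuousOnInterval g x y) :
    AbsolutelyContinuousOnInterval (φ ∘ g) x y := by
  refine squeeze_zero (fun _ => Finset.sum_nonneg fun _ _ => dist_nonneg) (fun _ => ?_)
    (by simpa using Tendsto.const_mul (K : ℝ) hg)
  rw [Finset.mul_sum]
  exact Finset.sum_le_sum fun _ _ => hφ.dist_le_mul _ _

section VectorValued

variable {E : Type*} [NormedAddCommGroup E] [NormedSpace ℝ E]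

theorem norm_sub_le_of_ae_norm_deriv_le {g : ℝ → E} {x y C : ℝ}
    (hg : AbsolutelyContinuousOnInterval g x y)
    (hdiff : ∀ᵐ s, s ∈ Set.uIoc x y → DifferentiableAt ℝ g s)
    (hC : ∀ᵐ s, s ∈ Set.uIoc x y → ‖deriv g s‖ ≤ C) :
    ‖g y - g x‖ ≤ C * |y - x| := by
  -- A norming functional reduces the claim to real functions, where the fundamental theorem of
  -- calculus for absolutely continuous functions is available.
  obtain ⟨φ, hφ_norm, hφ⟩ := exists_dual_vector'' ℝ (g y - g x)
  have hφg : AbsolutelyContinuousOnInterval (φ ∘ g) x y :=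
    lipschitzWith_comp_absolutelyContinuousOnInterval φ.lipschitz hg
  have hderiv : ∀ᵐ s, s ∈ Set.uIoc x y → ‖deriv (φ ∘ g) s‖ ≤ C := by
    filter_upwards [hdiff, hC] with s hs_diff hs_le hs
    rw [(φ.hasFDerivAt.comp_hasDerivAt s (hs_diff hs).hasDerivAt).deriv]
    exact (φ.le_of_opNorm_le hφ_norm _).trans (by simpa using hs_le hs)
  calc ‖g y - g x‖ = φ (g y - g x) := by simpa using hφ.symm
    _ = ∫ s in x..y, deriv (φ ∘ g) s := by
      rw [hφg.integral_deriv_eq_sub, map_sub, Function.comp_apply, Function.comp_apply]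
    _ ≤ ‖∫ s in x..y, deriv (φ ∘ g) s‖ := Real.le_norm_self _
    _ ≤ C * |y - x| := intervalIntegral.norm_integral_le_of_norm_le_const_ae hderiv

variable {f f' : ℝ → E} {a b t : ℝ}

theorem norm_taylor_remainder_le_of_norm_deriv_sub_le (hf : ∀ s, HasDerivAt f (f' s) s)
    (hf' : ∀ s, ‖f' s - f' t‖ ≤ b * |s - t|) (h : ℝ) :
    ‖f (t + h) - f t - h • f' t‖ ≤ b / 2 * h ^ 2 := by
  let remainder (u : ℝ) : E := f (t + u * h) - f t - (u * h) • f' t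
  have hremainder (u : ℝ) : HasDerivAt remainder (h • (f' (t + u * h) - f' t)) u := by
    have hmul : HasDerivAt (fun u : ℝ => u * h) h u := hasDerivAt_mul_const h
    rw [smul_sub]
    exact (((hf _).scomp u (hmul.const_add t)).sub_const (f t)).sub (hmul.smul_const (f' t))
  have hbound (u : ℝ) : HasDerivAt (fun u : ℝ => b / 2 * h ^ 2 * u ^ 2) (b * h ^ 2 * u) u :=
    ((hasDerivAt_pow 2 u).const_mul _).congr_deriv (by ring)
  have hderiv_le : ∀ u ∈ Set.Ico (0 : ℝ) 1, ‖h • (f' (t + u * h) - f' t)‖ ≤ b * h ^ 2 * u := by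
    intro u hu
    calc ‖h • (f' (t + u * h) - f' t)‖ = |h| * ‖f' (t + u * h) - f' t‖ := norm_smul _ _
      _ ≤ |h| * (b * |t + u * h - t|) := by gcongr; exact hf' _
      _ = b * h ^ 2 * u := by
        rw [add_sub_cancel_left, abs_mul, abs_of_nonneg hu.1, ← sq_abs h]; ring
  simpa [remainder] using image_norm_le_of_norm_deriv_right_le_deriv_boundary
    (fun u _ => (hremainder u).continuousAt.continuousWithinAt)
    (fun u _ => (hremainder u).hasDerivWithinAt) (by simp [remainder]) hbound hderiv_le
    (Set.right_mem_Icc.2 zero_le_one)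

theorem norm_symmetric_difference_sub_le_of_norm_deriv_sub_le (hf : ∀ s, HasDerivAt f (f' s) s)
    (hf' : ∀ s, ‖f' s - f' t‖ ≤ b * |s - t|) (h : ℝ) :
    ‖f (t + h) - f (t - h) - (2 * h) • f' t‖ ≤ b * h ^ 2 := by
  have hright := norm_taylor_remainder_le_of_norm_deriv_sub_le hf hf' h
  have hleft := norm_taylor_remainder_le_of_norm_deriv_sub_le hf hf' (-h)
  calc ‖f (t + h) - f (t - h) - (2 * h) • f' t‖
      = ‖(f (t + h) - f t - h • f' t) - (f (t + -h) - f t - (-h) • f' t)‖ := by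
        congr 1; rw [← sub_eq_add_neg]; module
    _ ≤ b / 2 * h ^ 2 + b / 2 * (-h) ^ 2 := norm_sub_le_of_le hright hleft
    _ = b * h ^ 2 := by ring

theorem norm_deriv_le_sqrt_of_norm_le_of_norm_deriv_sub_le (hf : ∀ s, HasDerivAt f (f' s) s)
    (ha : ∀ s, ‖f s‖ ≤ a) (hf' : ∀ s, ‖f' s - f' t‖ ≤ b * |s - t|) :
    ‖f' t‖ ≤ Real.sqrt (2 * a * b) := by
  have hquadratic (h : ℝ) : 2 * ‖f' t‖ * |h| ≤ 2 * a + b * h ^ 2 :=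
    calc 2 * ‖f' t‖ * |h| = ‖(2 * h) • f' t‖ := by
          rw [norm_smul, norm_mul, Real.norm_two, Real.norm_eq_abs]; ring
      _ ≤ ‖f (t + h) - f (t - h)‖ + ‖f (t + h) - f (t - h) - (2 * h) • f' t‖ :=
          norm_le_norm_add_norm_sub _ _
      _ ≤ (a + a) + b * h ^ 2 := add_le_add (norm_sub_le_of_le (ha _) (ha _))
          (norm_symmetric_difference_sub_le_of_norm_deriv_sub_le hf hf' h)
      _ = 2 * a + b * h ^ 2 := by ring
  have hdiscrim : discrim b (-(2 * ‖f' t‖)) (2 * a) ≤ 0 := discrim_le_zero fun h => by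
    have : 2 * ‖f' t‖ * h ≤ 2 * ‖f' t‖ * |h| := by gcongr; exact le_abs_self h
    linarith [hquadratic h]
  apply Real.le_sqrt_of_sq_le
  rw [discrim] at hdiscrim
  linarith

theorem stmt0_general (hf : Differentiable ℝ f)
    (hac : ∀ x y, AbsolutelyContinuousOnInterval (deriv f) x y)
    (hdiff : ∀ᵐ s, DifferentiableAt ℝ (deriv f) s) (h0 : ∀ s, ‖f s‖ ≤ a)
    (h2 : ∀ᵐ s, ‖iteratedDeriv 2 f s‖ ≤ b) (t : ℝ) :
    ‖deriv f t‖ ≤ Real.sqrt (2 * a * b) := by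
  have h2' : ∀ᵐ s, ‖deriv (deriv f) s‖ ≤ b := by
    simpa only [iteratedDeriv_succ, iteratedDeriv_zero] using h2
  exact norm_deriv_le_sqrt_of_norm_le_of_norm_deriv_sub_le (fun s => (hf s).hasDerivAt) h0
    fun s => norm_sub_le_of_ae_norm_deriv_le (hac t s) (hdiff.mono fun _ hs _ => hs)
      (h2'.mono fun _ hs _ => hs)

end VectorValued

/-- **Landau's inequality.** If `a, b > 0`, `f ∈ L²_{∞,∞}`, `|f t| ≤ a` for all `t`
and `|f'' t| ≤ b` for a.e. `t`, then `|f' t| ≤ √(2ab)` for all `t`. -/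
theorem stmt0 (a b : ℝ) (ha : 0 < a) (hb : 0 < b) (f : ℝ → ℝ) (hf : MemL 2 f)
    (h0 : ∀ t : ℝ, |f t| ≤ a)
    (h2 : ∀ᵐ t : ℝ ∂MeasureTheory.volume, |iteratedDeriv 2 f t| ≤ b) :
    ∀ t : ℝ, |deriv f t| ≤ Real.sqrt (2 * a * b) := by
  obtain ⟨-, -, hf_contDiff, K, hK⟩ := hf
  rw [iteratedDeriv_one] at hK
  exact stmt0_general (hf_contDiff.differentiable one_ne_zero)
    (fun _ _ => hK.lipschitzOnWith.absolutelyContinuousOnInterval) hK.ae_differentiableAt h0 h2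
end

section
/- The constant √2 in Landau's inequality cannot be decreased: for every C < √2 there exists a function f ∈ L^2_{∞,∞} with M_2(f) > 0 such that M_1(f) > C · M_0(f)^{1/2} · M_2(f)^{1/2}. -/
open MeasureTheory Filter

/-!
Equality in Landau's inequality is attained by the primitive `f t = ∫ x in 0..t, tent x` of the
tent function `tent x = max 0 (1 - |x|)`. Half of the triangle under the tent has area `1/2`, so
`‖f‖ = 1/2`; the height of the tent gives `‖f'‖ = 1`, and its slopes `±1` give `‖f''‖ = 1`.
-/

theorem unif_eq_of_forall_abs_le {f : ℝ → ℝ} {a t₀ : ℝ} (hf : ∀ t, |f t| ≤ a)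
    (ht₀ : |f t₀| = a) : unif f = a :=
  IsGreatest.csSup_eq ⟨⟨t₀, ht₀⟩, Set.forall_mem_range.2 hf⟩

theorem M_zero (f : ℝ → ℝ) : M 0 f = unif f := by
  rw [M, iteratedDeriv_zero]

theorem M_one (f : ℝ → ℝ) : M 1 f = unif (deriv f) := by
  rw [M, iteratedDeriv_one]

theorem M_two (f : ℝ → ℝ) : M 2 f = unif (deriv (deriv f)) := by
  rw [M, iteratedDeriv_succ, iteratedDeriv_one]

theorem memL_two_of_lipschitzWith_deriv {f : ℝ → ℝ} {B : ℝ} {K : NNReal}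
    (hf : Differentiable ℝ f) (hB : ∀ t, |f t| ≤ B) (hK : LipschitzWith K (deriv f)) :
    MemL 2 f :=
  ⟨hf.continuous, ⟨B, hB⟩, contDiff_one_iff_deriv.2 ⟨hf, hK.continuous⟩, K, by
    simpa only [Nat.add_one_sub_one, iteratedDeriv_one] using hK⟩

section IntegralFromZero

variable {g : ℝ → ℝ}

theorem integral_zero_neg_of_even (hg : g.Even) (t : ℝ) :
    ∫ x in 0..-t, g x = -∫ x in 0..t, g x := by
  calc ∫ x in 0..-t, g x = -∫ x in -t..-0, g x := by
        rw [neg_zero, intervalIntegral.integral_symm]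
    _ = -∫ x in 0..t, g (-x) := by rw [intervalIntegral.integral_comp_neg]
    _ = -∫ x in 0..t, g x := by simp only [hg _]

theorem abs_integral_zero_of_even_of_nonneg (heven : g.Even) (hnonneg : ∀ x, 0 ≤ g x) (t : ℝ) :
    |∫ x in 0..t, g x| = ∫ x in 0..|t|, g x := by
  have integral_abs_nonneg : 0 ≤ ∫ x in 0..|t|, g x :=
    intervalIntegral.integral_nonneg (abs_nonneg t) fun x _ ↦ hnonneg x
  rcases abs_choice t with ht | ht <;> rw [ht] at integral_abs_nonneg ⊢
  · exact abs_of_nonneg integral_abs_nonneg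
  · rw [integral_zero_neg_of_even heven] at integral_abs_nonneg ⊢
    exact abs_of_nonpos (neg_nonneg.1 integral_abs_nonneg)

theorem integral_zero_le_of_nonneg_of_eq_zero {R t : ℝ} (hR : 0 ≤ R) (ht : 0 ≤ t)
    (hg : IntervalIntegrable g volume 0 R) (hnonneg : ∀ x, 0 ≤ g x)
    (hzero : ∀ x, R < x → g x = 0) : ∫ x in 0..t, g x ≤ ∫ x in 0..R, g x := by
  rcases le_total t R with htR | hRt
  · exact intervalIntegral.integral_mono_interval le_rfl ht htR (ae_of_all _ hnonneg) hg
  · have eq_zero_on_Ioc : ∀ x ∈ Set.Ioc 0 t \ Set.Ioc 0 R, g x = 0 := fun x hx ↦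
      hzero x (lt_of_not_ge fun hxR ↦ hx.2 ⟨hx.1.1, hxR⟩)
    rw [intervalIntegral.integral_of_le ht, intervalIntegral.integral_of_le hR,
      setIntegral_eq_of_subset_of_forall_sdiff_eq_zero measurableSet_Ioc
        (Set.Ioc_subset_Ioc_right hRt) eq_zero_on_Ioc]

end IntegralFromZero

/-- The tent function: the piecewise linear bump of height `1` supported on `[-1, 1]`. -/
noncomputable def tent (x : ℝ) : ℝ := max 0 (1 - |x|)

theorem tent_zero : tent 0 = 1 := by
  norm_num [tent]

theorem tent_nonneg (x : ℝ) : 0 ≤ tent x := le_max_left _ _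

theorem tent_le_one (x : ℝ) : tent x ≤ 1 :=
  max_le zero_le_one (sub_le_self 1 (abs_nonneg x))

theorem even_tent : tent.Even := fun x ↦ by
  simp only [tent, abs_neg]

theorem tent_of_one_le {x : ℝ} (hx : 1 ≤ x) : tent x = 0 :=
  max_eq_left (sub_nonpos.2 (hx.trans (le_abs_self x)))

theorem tent_of_mem_Icc {x : ℝ} (hx : x ∈ Set.Icc 0 1) : tent x = 1 - x := by
  rw [tent, abs_of_nonneg hx.1, max_eq_right (sub_nonneg.2 hx.2)]

theorem lipschitzWith_tent : LipschitzWith 1 tent := by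
  have lipschitzWith_one_sub_abs : LipschitzWith 1 fun x : ℝ ↦ 1 - |x| :=
    LipschitzWith.mk_one fun x y ↦ by
      rw [dist_sub_left]
      exact abs_abs_sub_abs_le x y
  exact lipschitzWith_one_sub_abs.const_max 0

theorem abs_deriv_tent_le_one (x : ℝ) : |deriv tent x| ≤ 1 :=
  norm_deriv_le_of_lipschitz lipschitzWith_tent

theorem deriv_tent_of_mem_Ioo {x : ℝ} (hx : x ∈ Set.Ioo 0 1) : deriv tent x = -1 := by
  have tent_eventuallyEq : tent =ᶠ[nhds x] fun y ↦ 1 - y := by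
    filter_upwards [Ioo_mem_nhds hx.1 hx.2] with y hy
    exact tent_of_mem_Icc (Set.Ioo_subset_Icc_self hy)
  rw [tent_eventuallyEq.deriv_eq, deriv_const_sub, deriv_id'']

theorem integral_tent_zero_one : ∫ x in 0..1, tent x = 1 / 2 := by
  calc ∫ x in 0..1, tent x = ∫ x in (0 : ℝ)..1, (1 - x) :=
        intervalIntegral.integral_congr fun x hx ↦
          tent_of_mem_Icc (Set.uIcc_of_le (zero_le_one' ℝ) ▸ hx)
    _ = 1 / 2 := by
        rw [intervalIntegral.integral_comp_sub_left (fun x ↦ x), integral_id]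
        norm_num

/-- The primitive of the tent function vanishing at `0`, an extremal function for Landau's
inequality. -/
noncomputable def tentPrimitive (t : ℝ) : ℝ := ∫ x in 0..t, tent x

theorem hasDerivAt_tentPrimitive (t : ℝ) : HasDerivAt tentPrimitive (tent t) t :=
  (lipschitzWith_tent.continuous.integral_hasStrictDerivAt 0 t).hasDerivAt

theorem deriv_tentPrimitive : deriv tentPrimitive = tent :=
  funext fun t ↦ (hasDerivAt_tentPrimitive t).deriv

theorem abs_tentPrimitive_le (t : ℝ) : |tentPrimitive t| ≤ 1 / 2 := by
  calc |tentPrimitive t| = ∫ x in 0..|t|, tent x :=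
        abs_integral_zero_of_even_of_nonneg even_tent tent_nonneg t
    _ ≤ ∫ x in 0..1, tent x :=
        integral_zero_le_of_nonneg_of_eq_zero zero_le_one (abs_nonneg t)
          (lipschitzWith_tent.continuous.intervalIntegrable 0 1) tent_nonneg
          fun _ hx ↦ tent_of_one_le hx.le
    _ = 1 / 2 := integral_tent_zero_one

theorem memL_two_tentPrimitive : MemL 2 tentPrimitive :=
  memL_two_of_lipschitzWith_deriv (fun t ↦ (hasDerivAt_tentPrimitive t).differentiableAt)
    abs_tentPrimitive_le (deriv_tentPrimitive ▸ lipschitzWith_tent)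

theorem M_zero_tentPrimitive : M 0 tentPrimitive = 1 / 2 := by
  have abs_tentPrimitive_one : |tentPrimitive 1| = 1 / 2 := by
    rw [tentPrimitive, integral_tent_zero_one, abs_of_pos one_half_pos]
  rw [M_zero, unif_eq_of_forall_abs_le abs_tentPrimitive_le abs_tentPrimitive_one]

theorem M_one_tentPrimitive : M 1 tentPrimitive = 1 := by
  have abs_tent_le_one (x : ℝ) : |tent x| ≤ 1 := by
    rw [abs_of_nonneg (tent_nonneg x)]
    exact tent_le_one x
  have abs_tent_zero : |tent 0| = 1 := by rw [tent_zero, abs_one]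
  rw [M_one, deriv_tentPrimitive, unif_eq_of_forall_abs_le abs_tent_le_one abs_tent_zero]

theorem M_two_tentPrimitive : M 2 tentPrimitive = 1 := by
  have abs_deriv_tent_half : |deriv tent (1 / 2)| = 1 := by
    rw [deriv_tent_of_mem_Ioo ⟨one_half_pos, one_half_lt_one⟩, abs_neg, abs_one]
  rw [M_two, deriv_tentPrimitive,
    unif_eq_of_forall_abs_le abs_deriv_tent_le_one abs_deriv_tent_half]

theorem M_one_tentPrimitive_eq_sqrt_two_mul :
    M 1 tentPrimitive =
      √2 * M 0 tentPrimitive ^ ((1 : ℝ) / 2) * M 2 tentPrimitive ^ ((1 : ℝ) / 2) := by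
  rw [M_zero_tentPrimitive, M_one_tentPrimitive, M_two_tentPrimitive, Real.one_rpow, mul_one,
    ← Real.sqrt_eq_rpow, ← Real.sqrt_mul zero_le_two, mul_one_div_cancel two_ne_zero,
    Real.sqrt_one]

/-- The constant `√2` in Landau's inequality cannot be decreased. -/
theorem stmt1 (C : ℝ) (hC : C < Real.sqrt 2) :
    ∃ f : ℝ → ℝ, MemL 2 f ∧ 0 < M 2 f ∧
      C * (M 0 f) ^ ((1:ℝ)/2) * (M 2 f) ^ ((1:ℝ)/2) < M 1 f := by
  have M_zero_pos : 0 < M 0 tentPrimitive := M_zero_tentPrimitive ▸ one_half_pos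
  have M_two_pos : 0 < M 2 tentPrimitive := M_two_tentPrimitive ▸ zero_lt_one
  refine ⟨tentPrimitive, memL_two_tentPrimitive, M_two_pos, ?_⟩
  rw [M_one_tentPrimitive_eq_sqrt_two_mul]
  gcongr
end

section
/- Let r ≥ 2 be an integer and f ∈ L^r_{∞,∞}. Then M_{r−1}(f)² ≤ 2 · M_{r−2}(f) · M_r(f). -/
open MeasureTheory Filter

/-!
For `g` with bounded derivatives, the symmetric difference `g (t + s) - g (t - s)` differs from
`2 s g' t` by at most `‖g''‖ s²`, so `2 s |g' t| ≤ 2 ‖g‖ + ‖g''‖ s²` for every `s`. The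
discriminant of this quadratic in `s` gives Landau's inequality `‖g'‖² ≤ 2 ‖g‖ ‖g''‖`, which is
applied to `g = f⁽ʳ⁻²⁾`.

The suprema are junk unless the intermediate derivatives are bounded. A value of `f⁽ᵏ⁾` near any
point equals a `k`-th finite difference of `f`, hence is bounded by `2ᵏ ‖f‖`, and if `f⁽ᵏ⁾` is
Lipschitz this bound spreads to all of `ℝ`.
-/

open Set
open scoped NNReal Interval

section FiniteDifferences

theorem norm_iterate_fwdDiff_le {X E : Type*} [AddCommMonoid X] [SeminormedAddCommGroup E]
    {f : X → E} {C : ℝ} (hC : ∀ x, ‖f x‖ ≤ C) (h : X) (n : ℕ) (x : X) :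
    ‖(fwdDiff h)^[n] f x‖ ≤ 2 ^ n * C := by
  induction n generalizing x with
  | zero => simpa using hC x
  | succ n ih =>
    rw [Function.iterate_succ_apply']
    calc ‖(fwdDiff h)^[n] f (x + h) - (fwdDiff h)^[n] f x‖
        ≤ ‖(fwdDiff h)^[n] f (x + h)‖ + ‖(fwdDiff h)^[n] f x‖ := norm_sub_le _ _
      _ ≤ 2 ^ n * C + 2 ^ n * C := add_le_add (ih _) (ih _)
      _ = 2 ^ (n + 1) * C := by ring

theorem iteratedDeriv_fwdDiff {𝕜 E : Type*} [NontriviallyNormedField 𝕜] [NormedAddCommGroup E]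
    [NormedSpace 𝕜 E] {f : 𝕜 → E} {n : ℕ} (hf : ContDiff 𝕜 n f) (h : 𝕜) :
    iteratedDeriv n (fwdDiff h f) = fwdDiff h (iteratedDeriv n f) := by
  have hshift : ContDiff 𝕜 n (fun x ↦ f (x + h)) := hf.comp (contDiff_id.add contDiff_const)
  funext x
  exact (iteratedDeriv_fun_sub hshift.contDiffAt hf.contDiffAt).trans
    (by rw [iteratedDeriv_comp_add_const, fwdDiff])

theorem exists_iterate_fwdDiff_eq_pow_mul_iteratedDeriv {f : ℝ → ℝ} {n : ℕ}
    (hf : ContDiff ℝ n f) {h : ℝ} (hh : 0 < h) (t : ℝ) :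
    ∃ x ∈ Icc t (t + n * h), (fwdDiff h)^[n] f t = h ^ n * iteratedDeriv n f x := by
  induction n generalizing f with
  | zero => exact ⟨t, by simp, by simp⟩
  | succ n ih =>
    have hfn : ContDiff ℝ n f := hf.of_le (by exact_mod_cast n.le_succ)
    have hdiff : Differentiable ℝ (iteratedDeriv n f) :=
      hf.differentiable_iteratedDeriv n (by exact_mod_cast n.lt_succ_self)
    obtain ⟨x, hx, hΔ⟩ :=
      ih (f := fwdDiff h f) ((hfn.comp (contDiff_id.add contDiff_const)).sub hfn)
    obtain ⟨c, hc, hslope⟩ := exists_deriv_eq_slope (iteratedDeriv n f) (lt_add_of_pos_right x hh)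
      hdiff.continuous.continuousOn hdiff.differentiableOn
    refine ⟨c, ⟨hx.1.trans hc.1.le, ?_⟩, ?_⟩
    · push_cast
      linarith [hx.2, hc.2]
    · rw [Function.iterate_succ_apply, hΔ, iteratedDeriv_fwdDiff hfn, iteratedDeriv_succ, hslope,
        add_sub_cancel_left, fwdDiff]
      field_simp
      ring

end FiniteDifferences

section BoundedDerivatives

theorem abs_iteratedDeriv_le_of_lipschitzWith {f : ℝ → ℝ} {n : ℕ} {C : ℝ} {K : ℝ≥0}
    (hf : ContDiff ℝ n f) (hC : ∀ t, |f t| ≤ C) (hK : LipschitzWith K (iteratedDeriv n f))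
    (t : ℝ) : |iteratedDeriv n f t| ≤ 2 ^ n * C + K * n := by
  obtain ⟨x, hx, hΔ⟩ := exists_iterate_fwdDiff_eq_pow_mul_iteratedDeriv hf one_pos t
  have hnear : |iteratedDeriv n f x| ≤ 2 ^ n * C := by
    simpa [hΔ] using norm_iterate_fwdDiff_le (f := f) hC 1 n t
  have hdist : |t - x| ≤ n := by
    rw [abs_sub_comm, abs_of_nonneg (sub_nonneg.2 hx.1)]
    linarith [hx.2]
  calc |iteratedDeriv n f t|
      ≤ |iteratedDeriv n f x| + |iteratedDeriv n f t - iteratedDeriv n f x| := by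
        linarith [abs_sub_abs_le_abs_sub (iteratedDeriv n f t) (iteratedDeriv n f x)]
    _ ≤ 2 ^ n * C + K * |t - x| := add_le_add hnear (hK.dist_le_mul t x)
    _ ≤ 2 ^ n * C + K * n := by gcongr

theorem MemL.exists_abs_iteratedDeriv_le {r k : ℕ} {f : ℝ → ℝ} (hf : MemL r f)
    (hk : k ≤ r - 1) : ∃ B, ∀ t, |iteratedDeriv k f t| ≤ B := by
  obtain ⟨-, ⟨C, hC⟩, hdiff, K, hK⟩ := hf
  induction hk using Nat.decreasingInduction with
  | self => exact ⟨_, abs_iteratedDeriv_le_of_lipschitzWith hdiff hC hK⟩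
  | of_succ k hk ih =>
    obtain ⟨B, hB⟩ := ih
    have hlip : LipschitzWith B.toNNReal (iteratedDeriv k f) :=
      lipschitzWith_of_nnnorm_deriv_le
        (hdiff.differentiable_iteratedDeriv k (by exact_mod_cast hk)) fun t ↦ by
          rw [← iteratedDeriv_succ, ← norm_toNNReal]
          exact Real.toNNReal_le_toNNReal (hB t)
    exact ⟨_, abs_iteratedDeriv_le_of_lipschitzWith
      (hdiff.of_le (by exact_mod_cast hk.le)) hC hlip⟩

end BoundedDerivatives

section Landau

variable {E : Type*} [NormedAddCommGroup E] [NormedSpace ℝ E] {g g' : ℝ → E} {L : ℝ≥0}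

theorem norm_symmetric_sub_sub_smul_le (hg : ∀ t, HasDerivAt g (g' t) t)
    (hL : LipschitzWith L g') (t : ℝ) {s : ℝ} (hs : 0 ≤ s) :
    ‖g (t + s) - g (t - s) - (2 * s) • g' t‖ ≤ L * s ^ 2 := by
  have hderiv (u : ℝ) : HasDerivAt (fun u ↦ g (t + u) - g (t - u) - (2 * u) • g' t)
      ((g' (t + u) - g' t) + (g' (t - u) - g' t)) u := by
    refine (((hg (t + u)).comp_const_add t u).sub ((hg (t - u)).comp_const_sub t u)).sub
      (((hasDerivAt_id u).const_mul 2).smul_const (g' t)) |>.congr_deriv ?_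
    module
  have hbound (u : ℝ) (hu : 0 ≤ u) :
      ‖(g' (t + u) - g' t) + (g' (t - u) - g' t)‖ ≤ L * (2 * u) := by
    have hright := hL.norm_sub_le (t + u) t
    have hleft := hL.norm_sub_le (t - u) t
    simp only [add_sub_cancel_left, sub_sub_cancel_left, norm_neg, Real.norm_of_nonneg hu]
      at hright hleft
    linarith [norm_add_le (g' (t + u) - g' t) (g' (t - u) - g' t)]
  exact image_norm_le_of_norm_deriv_right_le_deriv_boundary (a := 0) (b := s)
    (B := fun u ↦ L * u ^ 2) (B' := fun u ↦ L * (2 * u))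
    (fun u _ ↦ (hderiv u).continuousAt.continuousWithinAt)
    (fun u _ ↦ (hderiv u).hasDerivWithinAt) (by simp)
    (fun u ↦ by simpa using (hasDerivAt_pow 2 u).const_mul (L : ℝ))
    (fun u hu ↦ hbound u hu.1) (right_mem_Icc.2 hs)

theorem norm_sq_le_two_mul_of_hasDerivAt_of_lipschitzWith (hg : ∀ t, HasDerivAt g (g' t) t)
    {A : ℝ} (hA : ∀ t, ‖g t‖ ≤ A) (hL : LipschitzWith L g') (t : ℝ) :
    ‖g' t‖ ^ 2 ≤ 2 * A * L := by
  have hquadratic (s : ℝ) (hs : 0 ≤ s) : 2 * s * ‖g' t‖ ≤ 2 * A + L * s ^ 2 :=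
    calc 2 * s * ‖g' t‖ = ‖(2 * s) • g' t‖ := by
          rw [norm_smul, Real.norm_of_nonneg (by positivity)]
      _ ≤ ‖g (t + s) - g (t - s)‖ + ‖g (t + s) - g (t - s) - (2 * s) • g' t‖ :=
          norm_le_norm_add_norm_sub _ _
      _ ≤ 2 * A + L * s ^ 2 := by
          linarith [norm_sub_le (g (t + s)) (g (t - s)), hA (t + s), hA (t - s),
            norm_symmetric_sub_sub_smul_le hg hL t hs]
  have hdiscrim : discrim (L : ℝ) (-2 * ‖g' t‖) (2 * A) ≤ 0 := discrim_le_zero fun s ↦ by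
    have habs : s * ‖g' t‖ ≤ |s| * ‖g' t‖ := by gcongr; exact le_abs_self s
    have hquadratic_abs := hquadratic |s| (abs_nonneg s)
    rw [sq_abs] at hquadratic_abs
    linarith
  rw [discrim] at hdiscrim
  linarith

end Landau

section UniformNorm

variable {f : ℝ → ℝ}

theorem abs_le_unif {B : ℝ} (hB : ∀ t, |f t| ≤ B) (t : ℝ) : |f t| ≤ unif f :=
  le_ciSup (f := fun t ↦ |f t|) ⟨B, forall_mem_range.2 hB⟩ t

theorem unif_nonneg (f : ℝ → ℝ) : 0 ≤ unif f :=
  Real.iSup_nonneg fun _ ↦ abs_nonneg _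

theorem unif_sq_le {c : ℝ} (hc : ∀ t, |f t| ^ 2 ≤ c) : unif f ^ 2 ≤ c := by
  rw [unif, Real.iSup_pow fun _ ↦ abs_nonneg _]
  exact ciSup_le hc

theorem abs_sub_le_of_ae_abs_deriv_le {a b L : ℝ} (hf : AbsolutelyContinuousOnInterval f a b)
    (hL : ∀ᵐ t, t ∈ Ι a b → |deriv f t| ≤ L) : |f b - f a| ≤ L * |b - a| := by
  rw [← hf.integral_deriv_eq_sub]
  exact intervalIntegral.norm_integral_le_of_norm_le_const_ae (f := deriv f) hL

theorem lipschitzWith_unif_deriv {K : ℝ≥0} (hf : LipschitzWith K f) :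
    LipschitzWith (unif (deriv f)).toNNReal f :=
  LipschitzWith.of_dist_le' fun _ _ ↦
    abs_sub_le_of_ae_abs_deriv_le hf.lipschitzOnWith.absolutelyContinuousOnInterval <|
      ae_of_all _ fun t _ ↦ abs_le_unif (f := deriv f) (fun _ ↦ norm_deriv_le_of_lipschitz hf) t

theorem unif_deriv_sq_le {K : ℝ≥0} (hf : Differentiable ℝ f) {B : ℝ} (hB : ∀ t, |f t| ≤ B)
    (hK : LipschitzWith K (deriv f)) :
    unif (deriv f) ^ 2 ≤ 2 * unif f * unif (deriv (deriv f)) :=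
  unif_sq_le fun t ↦ by
    simpa only [Real.coe_toNNReal _ (unif_nonneg _)] using!
      norm_sq_le_two_mul_of_hasDerivAt_of_lipschitzWith (fun t ↦ (hf t).hasDerivAt)
        (abs_le_unif hB) (lipschitzWith_unif_deriv hK) t

end UniformNorm

/-- For `r ≥ 2` and `f ∈ L^r_{∞,∞}` one has `M_{r-1}(f)² ≤ 2 M_{r-2}(f) M_r(f)`. -/
theorem stmt2 (r : ℕ) (hr : 2 ≤ r) (f : ℝ → ℝ) (hf : MemL r f) :
    (M (r - 1) f) ^ 2 ≤ 2 * M (r - 2) f * M r f := by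
  obtain ⟨n, rfl⟩ := Nat.exists_eq_add_of_le' hr
  obtain ⟨B, hB⟩ := hf.exists_abs_iteratedDeriv_le (k := n) (by lia)
  obtain ⟨-, -, hdiff, K, hK⟩ := hf
  have hdiff_n : Differentiable ℝ (iteratedDeriv n f) :=
    hdiff.differentiable_iteratedDeriv n (by exact_mod_cast n.lt_succ_self)
  have hsucc : iteratedDeriv (n + 2 - 1) f = deriv (iteratedDeriv n f) := iteratedDeriv_succ
  rw [hsucc] at hK
  simpa only [M, hsucc, iteratedDeriv_succ, Nat.add_sub_cancel] using
    unif_deriv_sq_le hdiff_n hB hK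
end

section
/- (Kolmogorov's comparison theorem) Let r ∈ ℕ, f ∈ L^r_{∞,∞}, and a, λ > 0 be such that M_0(f) ≤ M_0(a·φ_{λ,r}) and M_r(f) ≤ M_r(a·φ_{λ,r}). If ξ, η ∈ ℝ are such that f(ξ) = a·φ_{λ,r}(η), then |f'(ξ)| ≤ a·|φ'_{λ,r}(η)|. -/
open MeasureTheory Filter

/-!
Translated by quarter periods, the Euler splines become odd functions `S_r` shaped like the sine,
with `S_{r+1}' = S_r (· + π/2)`. After rescaling, `f⁽ʳ⁾` is bounded by `1` and `f` by `S_r (π/2)`,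
and one shows by induction on `r` that `f` never falls from a common value faster than `S_r` does.

In the step from `r` to `r + 1`, suppose first that `|f'| ≤ S_r (π/2)`. Comparing `f'` with `S_r`
and integrating, a slope `|f' x| = S_r η` makes `f` rise on one side of `x`, and fall on the other,
by at least `S_{r+1} (π/2) - S_{r+1} (π/2 - η)`. As `|f| ≤ S_{r+1} (π/2)`, this leaves
`|f x| ≤ S_{r+1} (π/2 - η)`, which bounds the slope in terms of the value as claimed.
The bound `|f'| ≤ S_r (π/2)` itself holds because otherwise a rescaling of `f` would attain this
slope with smaller values than the same estimate allows. Finally, a bound of the slope in terms of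
the value is a differential inequality, and integrating it completes the induction.
-/

open Set
open scoped NNReal Real Topology

section EulerSpline

lemma abs_real_sign_le_one (x : ℝ) : |Real.sign x| ≤ 1 := by
  rcases Real.sign_apply_eq x with h | h | h <;> simp [h]

lemma measurable_real_sign : Measurable Real.sign :=
  Measurable.ite measurableSet_Iio measurable_const
    (Measurable.ite measurableSet_Ioi measurable_const measurable_const)

lemma antiperiodic_of_sub_eq_integral {g G : ℝ → ℝ} {T : ℝ} (hT : T ≠ 0)
    (hg : Function.Antiperiodic g T) (hG : ∀ a b, G b - G a = ∫ x in a..b, g x)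
    (hGi : ∀ a b, IntervalIntegrable G volume a b) (hmean : ∫ x in 0..(2 * T), G x = 0) :
    Function.Antiperiodic G T := by
  have translate (x : ℝ) : G (x + T) = G T + G 0 - G x := by
    have hx : ∫ y in T..(x + T), g y = -∫ y in 0..x, g y := by
      have h := intervalIntegral.integral_comp_add_right (a := 0) (b := x) g T
      rw [zero_add] at h
      rw [← h, ← intervalIntegral.integral_neg]
      simp only [hg _]
    linarith [hG T (x + T), hG 0 x]
  have second_half : ∫ x in T..(2 * T), G x = T * (G T + G 0) - ∫ x in 0..T, G x := by
    have h := intervalIntegral.integral_comp_add_right (a := 0) (b := T) G T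
    rw [zero_add, ← two_mul] at h
    simp only [← h, translate, intervalIntegral.integral_sub intervalIntegrable_const (hGi 0 T),
      intervalIntegral.integral_const, sub_zero, smul_eq_mul]
  have sum_eq_zero : G T + G 0 = 0 := by
    rw [← intervalIntegral.integral_add_adjacent_intervals (hGi 0 T) (hGi T (2 * T)),
      second_half] at hmean
    exact (mul_eq_zero.1 (by linarith)).resolve_left hT
  intro x
  rw [translate, sum_eq_zero, zero_sub]

lemma intervalIntegrable_eulerPhi (r : ℕ) (a b : ℝ) :
    IntervalIntegrable (eulerPhi r) volume a b := by
  induction r generalizing a b with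
  | zero =>
    refine (intervalIntegrable_const (c := (1 : ℝ))).mono_fun
      (measurable_real_sign.comp Real.measurable_sin).aestronglyMeasurable (.of_forall fun x => ?_)
    simpa using! abs_real_sign_le_one (Real.sin x)
  | succ r ih =>
    exact ((intervalIntegral.continuous_primitive ih 0).sub continuous_const).intervalIntegrable a b

lemma continuous_eulerPhi_succ (r : ℕ) : Continuous (eulerPhi (r + 1)) :=
  (intervalIntegral.continuous_primitive (intervalIntegrable_eulerPhi r) 0).sub continuous_const

lemma eulerPhi_succ_sub (r : ℕ) (a b : ℝ) :
    eulerPhi (r + 1) b - eulerPhi (r + 1) a = ∫ x in a..b, eulerPhi r x := by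
  rw [← intervalIntegral.integral_interval_sub_left (intervalIntegrable_eulerPhi r 0 b)
    (intervalIntegrable_eulerPhi r 0 a)]
  exact sub_sub_sub_cancel_right _ _ _

lemma integral_eulerPhi_succ (r : ℕ) : ∫ x in 0..(2 * π), eulerPhi (r + 1) x = 0 := by
  have hprim := intervalIntegral.continuous_primitive (intervalIntegrable_eulerPhi r) 0
  simp only [eulerPhi]
  rw [intervalIntegral.integral_sub (hprim.intervalIntegrable _ _) intervalIntegrable_const,
    intervalIntegral.integral_const, smul_eq_mul, sub_zero]
  field_simp
  ring

lemma antiperiodic_eulerPhi (r : ℕ) : Function.Antiperiodic (eulerPhi r) π := by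
  induction r with
  | zero => intro x; simp [eulerPhi, Real.sin_add_pi, Real.sign_neg]
  | succ r ih =>
    exact antiperiodic_of_sub_eq_integral Real.pi_ne_zero ih (eulerPhi_succ_sub r)
      (intervalIntegrable_eulerPhi (r + 1)) (integral_eulerPhi_succ r)

lemma hasDerivAt_eulerPhi (r : ℕ) (x : ℝ) :
    HasDerivAt (eulerPhi (r + 2)) (eulerPhi (r + 1) x) x :=
  (((continuous_eulerPhi_succ r).integral_hasStrictDerivAt 0 x).hasDerivAt).sub_const _

end EulerSpline

section EulerSine

/-- The Euler spline `φ_r` translated by `r` quarter periods. Like the sine, for `r ≥ 1` it is odd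
and increasing on `[-π/2, π/2]`, and its derivative is its predecessor translated by `π/2`. -/
noncomputable def eulerSine (r : ℕ) (x : ℝ) : ℝ := eulerPhi r (x + r * (π / 2))

lemma eulerPhi_eq_eulerSine (r : ℕ) (x : ℝ) : eulerPhi r x = eulerSine r (x - r * (π / 2)) := by
  rw [eulerSine, sub_add_cancel]

lemma antiperiodic_eulerSine (r : ℕ) : Function.Antiperiodic (eulerSine r) π :=
  (antiperiodic_eulerPhi r).add_const _

lemma continuous_eulerSine_succ (r : ℕ) : Continuous (eulerSine (r + 1)) :=
  (continuous_eulerPhi_succ r).comp (continuous_add_const _)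

lemma eulerSine_succ_sub (r : ℕ) (a b : ℝ) :
    eulerSine (r + 1) b - eulerSine (r + 1) a = ∫ x in a..b, eulerSine r (x + π / 2) := by
  simp only [eulerSine, eulerPhi_succ_sub]
  rw [← intervalIntegral.integral_comp_add_right (eulerPhi r)]
  refine intervalIntegral.integral_congr fun x _ => ?_
  congr 1
  push_cast
  ring

lemma intervalIntegrable_eulerSine_comp_add (r : ℕ) (c a b : ℝ) :
    IntervalIntegrable (fun x => eulerSine r (x + c)) volume a b := by
  simp only [eulerSine, add_assoc]
  exact (IntervalIntegrable.comp_add_right_iff enorm_ne_top).2 (intervalIntegrable_eulerPhi r _ _)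

lemma hasDerivAt_eulerSine (r : ℕ) (x : ℝ) :
    HasDerivAt (eulerSine (r + 2)) (eulerSine (r + 1) (x + π / 2)) x := by
  refine ((hasDerivAt_eulerPhi r _).comp_add_const x _).congr_deriv ?_
  rw [eulerSine]
  congr 1
  push_cast
  ring

lemma odd_eulerSine (r : ℕ) : Function.Odd (eulerSine r) := by
  induction r with
  | zero => intro x; simp [eulerSine, eulerPhi, Real.sign_neg]
  | succ r ih =>
    have even_deriv (x : ℝ) : eulerSine r (-x + π / 2) = eulerSine r (x + π / 2) := by
      rw [show -x + π / 2 = -(x + π / 2 - π) by ring, ih, (antiperiodic_eulerSine r).sub_eq,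
        neg_neg]
    have symmetric (x : ℝ) : eulerSine (r + 1) (-x) + eulerSine (r + 1) x =
        2 * eulerSine (r + 1) 0 := by
      have h := intervalIntegral.integral_comp_neg (a := 0) (b := x)
        fun y => eulerSine r (y + π / 2)
      simp only [even_deriv, neg_zero, ← eulerSine_succ_sub] at h
      linarith
    have zero : eulerSine (r + 1) 0 = 0 := by
      have h := antiperiodic_eulerSine (r + 1)
      linarith [symmetric π, h.eq, h.neg_eq]
    intro x
    linarith [symmetric x]

lemma eulerSine_zero_left {x : ℝ} (hx : x ∈ Ioo 0 π) : eulerSine 0 x = 1 := by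
  simpa [eulerSine, eulerPhi] using Real.sign_of_pos (Real.sin_pos_of_mem_Ioo hx)

lemma eulerSine_zero_right (r : ℕ) : eulerSine r 0 = 0 := by
  simpa [self_eq_neg] using odd_eulerSine r 0

lemma eulerSine_pi_sub (r : ℕ) (x : ℝ) : eulerSine r (π - x) = eulerSine r x := by
  rw [sub_eq_neg_add, antiperiodic_eulerSine, odd_eulerSine, neg_neg]

lemma strictMonoOn_eulerSine_succ_of_pos {r : ℕ} (hpos : ∀ x ∈ Ioo 0 π, 0 < eulerSine r x) :
    StrictMonoOn (eulerSine (r + 1)) (Icc (-(π / 2)) (π / 2)) := by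
  intro a ha b hb hab
  rw [← sub_pos, eulerSine_succ_sub]
  refine intervalIntegral.intervalIntegral_pos_of_pos_on
    (intervalIntegrable_eulerSine_comp_add r _ a b) (fun x hx => hpos _ ?_) hab
  constructor <;> linarith [ha.1, hb.2, hx.1, hx.2]

lemma eulerSine_pos (r : ℕ) {x : ℝ} (hx : x ∈ Ioo 0 π) : 0 < eulerSine r x := by
  induction r generalizing x with
  | zero => rw [eulerSine_zero_left hx]; exact one_pos
  | succ r ih =>
    have pos_of_le {y : ℝ} (hy : 0 < y) (hy' : y ≤ π / 2) : 0 < eulerSine (r + 1) y := by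
      rw [← eulerSine_zero_right (r + 1)]
      exact strictMonoOn_eulerSine_succ_of_pos (fun x => ih) ⟨by linarith, by linarith⟩
        ⟨by linarith, hy'⟩ hy
    rcases le_total x (π / 2) with h | h
    · exact pos_of_le hx.1 h
    · rw [← eulerSine_pi_sub]
      exact pos_of_le (by linarith [hx.2]) (by linarith)

lemma strictMonoOn_eulerSine_succ (r : ℕ) :
    StrictMonoOn (eulerSine (r + 1)) (Icc (-(π / 2)) (π / 2)) :=
  strictMonoOn_eulerSine_succ_of_pos fun _ => eulerSine_pos r

lemma eulerSine_one {x : ℝ} (hx : x ∈ Icc (-(π / 2)) (π / 2)) : eulerSine 1 x = x := by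
  have h : eulerSine 1 x - eulerSine 1 0 = ∫ _ in 0..x, (1 : ℝ) := by
    rw [eulerSine_succ_sub]
    refine intervalIntegral.integral_congr_uIoo fun y hy => eulerSine_zero_left ?_
    have hlow : -(π / 2) ≤ min 0 x := le_min (by linarith [Real.pi_pos]) hx.1
    have hupp : max 0 x ≤ π / 2 := max_le (by positivity) hx.2
    constructor <;> linarith [hy.1, hy.2]
  simpa [eulerSine_zero_right] using h

lemma eulerSine_pi_div_two_pos (r : ℕ) : 0 < eulerSine r (π / 2) :=
  eulerSine_pos r ⟨by positivity, by linarith [Real.pi_pos]⟩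

lemma eulerSine_nonneg (r : ℕ) {x : ℝ} (hx : x ∈ Icc 0 (π / 2)) : 0 ≤ eulerSine r x := by
  rcases hx.1.eq_or_lt with rfl | h
  · exact (eulerSine_zero_right r).ge
  · exact (eulerSine_pos r ⟨h, by linarith [hx.2]⟩).le

lemma abs_eulerSine (r : ℕ) {y : ℝ} (hy : |y| ≤ π / 2) : |eulerSine r y| = eulerSine r |y| := by
  rw [← abs_of_nonneg (eulerSine_nonneg r ⟨abs_nonneg y, hy⟩)]
  rcases abs_choice y with h | h <;> simp [h, odd_eulerSine r y]

lemma eulerSine_pi_div_two_sub_abs (r : ℕ) (y : ℝ) :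
    eulerSine r (π / 2 - |y|) = eulerSine r (y + π / 2) := by
  rcases abs_choice y with h | h
  · rw [h, ← eulerSine_pi_sub]
    ring_nf
  · rw [h]
    ring_nf

lemma exists_mem_Icc_eulerSine_eq_abs (r : ℕ) (y : ℝ) : ∃ z ∈ Icc 0 (π / 2),
    eulerSine r z = |eulerSine r y| ∧ |deriv (eulerSine r) z| = |deriv (eulerSine r) y| := by
  have deriv_neg (x : ℝ) : |deriv (eulerSine r) (-x)| = |deriv (eulerSine r) x| := by
    have h := deriv_comp_neg (eulerSine r) x
    rw [funext (odd_eulerSine r), deriv.fun_neg, neg_inj] at h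
    rw [h]
  have deriv_add_pi (x : ℝ) : |deriv (eulerSine r) (x + π)| = |deriv (eulerSine r) x| := by
    rw [← deriv_comp_add_const, funext (antiperiodic_eulerSine r), deriv.fun_neg, abs_neg]
  have periodic : Function.Periodic
      (fun x => (|eulerSine r x|, |deriv (eulerSine r) x|)) π := fun x =>
    Prod.ext (by simp [antiperiodic_eulerSine r x]) (deriv_add_pi x)
  obtain ⟨x, hx, hyx⟩ := periodic.exists_mem_Ico Real.pi_pos y (-(π / 2))
  obtain ⟨hval, hderiv⟩ := Prod.mk.inj hyx
  have hx' : |x| ≤ π / 2 := abs_le.2 ⟨hx.1, by linarith [hx.2]⟩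
  refine ⟨|x|, ⟨abs_nonneg x, hx'⟩, by rw [hval, abs_eulerSine r hx'], ?_⟩
  rcases abs_choice x with h | h <;> simp [h, hderiv, deriv_neg]

lemma abs_eulerSine_le (r : ℕ) (y : ℝ) : |eulerSine (r + 1) y| ≤ eulerSine (r + 1) (π / 2) := by
  have hpi := Real.pi_pos
  obtain ⟨z, hz, hyz, -⟩ := exists_mem_Icc_eulerSine_eq_abs (r + 1) y
  rw [← hyz]
  exact (strictMonoOn_eulerSine_succ r).monotoneOn ⟨by linarith [hz.1], hz.2⟩
    ⟨by linarith, le_rfl⟩ hz.2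

lemma exists_eulerSine_eq (r : ℕ) {v : ℝ} (hv : v ∈ Icc 0 (eulerSine (r + 1) (π / 2))) :
    ∃ y ∈ Icc 0 (π / 2), eulerSine (r + 1) y = v := by
  have h := intermediate_value_Icc (by positivity : (0 : ℝ) ≤ π / 2)
    (continuous_eulerSine_succ r).continuousOn
  rw [eulerSine_zero_right] at h
  exact h hv

end EulerSine

section Calculus

lemma deriv_const_mul_comp_mul_left (c m : ℝ) (f : ℝ → ℝ) (x : ℝ) :
    deriv (fun x => c * f (m * x)) x = c * (m * deriv f (m * x)) := by
  rw [deriv_const_mul_field, deriv_comp_mul_left, smul_eq_mul]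

lemma exists_one_lt_pow_eq {y : ℝ} (hy : 1 < y) {n : ℕ} (hn : n ≠ 0) : ∃ m > 1, m ^ n = y :=
  ⟨y ^ (n⁻¹ : ℝ), Real.one_lt_rpow hy (by positivity),
    Real.rpow_inv_natCast_pow (zero_le_one.trans hy.le) hn⟩

lemma deriv_eq_zero_of_forall_abs_le {f : ℝ → ℝ} {x : ℝ} (h : ∀ y, |f y| ≤ |f x|) :
    deriv f x = 0 := by
  rcases abs_choice (f x) with hx | hx <;> rw [hx] at h
  · exact IsLocalMax.deriv_eq_zero (.of_forall fun y => (abs_le.1 (h y)).2)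
  · exact IsLocalMin.deriv_eq_zero (.of_forall fun y => by linarith [(abs_le.1 (h y)).1])

variable {Φ Φ' f : ℝ → ℝ} {A B ξ η t : ℝ}

lemma comp_sub_mul_le_of_neg_le_deriv (hΦ : ∀ y, HasDerivAt Φ (Φ' y) y)
    (hpos : ∀ y ∈ Ioo A B, 0 < Φ' y) (hf : Differentiable ℝ f)
    (hderiv : ∀ x, ∀ y ∈ Ioo A B, f x = Φ y → -Φ' y ≤ deriv f x) {κ : ℝ} (hκ : 1 < κ)
    (hη : η < B) (ht : 0 ≤ t) (hA : A ≤ η - κ * t) (hξ : Φ η ≤ f ξ) :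
    Φ (η - κ * t) ≤ f (ξ + t) := by
  have hpath (s : ℝ) : HasDerivAt (fun s => Φ (η - κ * s)) (-(κ * Φ' (η - κ * s))) s := by
    have h : HasDerivAt (fun s => η - κ * s) (-κ) s := by
      simpa using ((hasDerivAt_id s).const_mul κ).const_sub η
    exact ((hΦ _).comp s h).congr_deriv (by ring)
  refine image_le_of_deriv_right_lt_deriv_boundary (B := fun s => f (ξ + s))
    (fun s _ => (hpath s).continuousAt.continuousWithinAt)
    (fun s _ => (hpath s).hasDerivWithinAt) (by simpa using hξ)
    (fun s => (hf (ξ + s)).hasDerivAt.comp_const_add ξ s) (fun s hs hcontact => ?_) ⟨ht, le_rfl⟩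
  have hmem : η - κ * s ∈ Ioo A B := ⟨by nlinarith [hs.2], by nlinarith [hs.1]⟩
  nlinarith [hderiv _ _ hmem hcontact.symm, hpos _ hmem]

/-- Comparison at contact points only yields strict barriers, so `f` is compared with slightly
faster traversals of `Φ` that start lower and end at an arbitrary `z < η - t`. -/
lemma comp_sub_le_of_neg_le_deriv (hΦ : ∀ y, HasDerivAt Φ (Φ' y) y)
    (hpos : ∀ y ∈ Ioo A B, 0 < Φ' y) (hf : Differentiable ℝ f)
    (hderiv : ∀ x, ∀ y ∈ Ioo A B, f x = Φ y → -Φ' y ≤ deriv f x)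
    (hη : η ≤ B) (ht : 0 ≤ t) (hA : A < η - t) (hξ : Φ η ≤ f ξ) : Φ (η - t) ≤ f (ξ + t) := by
  rcases ht.eq_or_lt with rfl | ht
  · simpa using hξ
  by_contra! hlt
  obtain ⟨z, hz, hAz, hzt⟩ : ∃ z, f (ξ + t) < Φ z ∧ A < z ∧ z < η - t :=
    (((hΦ _).continuousAt.continuousWithinAt.eventually (lt_mem_nhds hlt)).and
      (Ioo_mem_nhdsLT hA)).exists
  have hmono : MonotoneOn Φ (Icc A B) := by
    refine monotoneOn_of_deriv_nonneg (convex_Icc A B)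
      (fun y _ => (hΦ y).continuousAt.continuousWithinAt)
      (fun y _ => (hΦ y).differentiableAt.differentiableWithinAt) fun y hy => ?_
    rw [interior_Icc] at hy
    exact (hΦ y).deriv ▸ (hpos y hy).le
  obtain ⟨w, hzw, hwη⟩ : ∃ w, z + t < w ∧ w < η := exists_between (by linarith)
  have hstart : Φ w ≤ f ξ :=
    (hmono ⟨by linarith, by linarith⟩ ⟨by linarith, hη⟩ hwη.le).trans hξ
  have hend : w - (w - z) / t * t = z := by field_simp; ring
  have h := comp_sub_mul_le_of_neg_le_deriv hΦ hpos hf hderiv (κ := (w - z) / t)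
    ((one_lt_div ht).2 (by linarith)) (hwη.trans_le hη) ht.le (by rw [hend]; exact hAz.le) hstart
  rw [hend] at h
  exact h.not_gt hz

end Calculus

section LipschitzDeriv

/-- `f` is `n` times continuously differentiable and its `n`-th derivative is `K`-Lipschitz; for
bounded `f` this is the class `L^{n+1}_{∞,∞}` with the bound `K` on the derivative of order
`n + 1`. -/
structure LipschitzDeriv (K : ℝ≥0) (n : ℕ) (f : ℝ → ℝ) : Prop where
  contDiff : ContDiff ℝ n f
  lipschitzWith : LipschitzWith K (iteratedDeriv n f)

namespace LipschitzDeriv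

variable {K L : ℝ≥0} {n : ℕ} {f : ℝ → ℝ}

lemma weaken (hf : LipschitzDeriv K n f) (hKL : K ≤ L) : LipschitzDeriv L n f :=
  ⟨hf.contDiff, hf.lipschitzWith.weaken hKL⟩

lemma differentiable (hf : LipschitzDeriv K (n + 1) f) : Differentiable ℝ f :=
  hf.contDiff.differentiable (by simp)

lemma abs_iteratedDeriv_succ_le (hf : LipschitzDeriv K n f) (x : ℝ) :
    |iteratedDeriv (n + 1) f x| ≤ K := by
  rw [iteratedDeriv_succ]
  exact norm_deriv_le_of_lipschitz hf.lipschitzWith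

protected lemma deriv (hf : LipschitzDeriv K (n + 1) f) : LipschitzDeriv K n (deriv f) where
  contDiff := hf.contDiff.deriv'
  lipschitzWith := by simpa only [iteratedDeriv_succ'] using hf.lipschitzWith

lemma of_deriv (hf : Differentiable ℝ f) (hf' : LipschitzDeriv K n (deriv f)) :
    LipschitzDeriv K (n + 1) f where
  contDiff := contDiff_succ_iff_deriv.2 ⟨hf, by simp, hf'.contDiff⟩
  lipschitzWith := by simpa only [iteratedDeriv_succ'] using hf'.lipschitzWith

lemma const_mul (hf : LipschitzDeriv K n f) (c : ℝ) :
    LipschitzDeriv (‖c‖₊ * K) n fun x => c * f x where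
  contDiff := contDiff_const.mul hf.contDiff
  lipschitzWith := by
    have heq : iteratedDeriv n (fun x => c * f x) = fun x => c * iteratedDeriv n f x :=
      funext fun _ => iteratedDeriv_const_mul_field c f
    rw [heq]
    exact (lipschitzWith_smul c).comp hf.lipschitzWith

lemma comp_mul_left (hf : LipschitzDeriv K n f) (m : ℝ) :
    LipschitzDeriv (K * ‖m‖₊ ^ (n + 1)) n fun x => f (m * x) where
  contDiff := hf.contDiff.comp (contDiff_const.mul contDiff_id)
  lipschitzWith := by
    rw [iteratedDeriv_comp_const_mul hf.contDiff]
    have h := (lipschitzWith_smul (m ^ n)).comp (hf.lipschitzWith.comp (lipschitzWith_smul m))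
    refine h.weaken (le_of_eq ?_)
    rw [nnnorm_pow]
    ring

lemma rescale (hf : LipschitzDeriv K n f) {c m : ℝ} (hL : |c| * (K * |m| ^ (n + 1)) = L) :
    LipschitzDeriv L n fun x => c * f (m * x) :=
  ((hf.comp_mul_left m).const_mul c).weaken (by rw [← NNReal.coe_le_coe, ← hL]; simp)

lemma neg (hf : LipschitzDeriv K n f) : LipschitzDeriv K n fun x => -f x := by
  simpa using hf.const_mul (-1)

lemma comp_neg (hf : LipschitzDeriv K n f) : LipschitzDeriv K n fun x => f (-x) := by
  simpa using hf.comp_mul_left (-1)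

lemma comp_add_sub (hf : LipschitzDeriv K (n + 1) f) (s : ℝ) :
    LipschitzDeriv (K * ‖s‖₊) n fun x => f (x + s) - f x where
  contDiff := by
    have h : ContDiff ℝ n f := hf.contDiff.of_le (by simp)
    fun_prop
  lipschitzWith := by
    have hn : ContDiff ℝ n f := hf.contDiff.of_le (by simp)
    have hdiff : Differentiable ℝ (iteratedDeriv n f) :=
      hf.contDiff.differentiable_iteratedDeriv n (by exact_mod_cast n.lt_succ_self)
    have heq : iteratedDeriv n (fun x => f (x + s) - f x) =
        fun x => iteratedDeriv n f (x + s) - iteratedDeriv n f x := by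
      ext x
      rw [iteratedDeriv_fun_sub (by fun_prop) (by fun_prop), iteratedDeriv_comp_add_const]
    rw [heq]
    refine lipschitzWith_of_nnnorm_deriv_le (by fun_prop) fun x => ?_
    rw [deriv_fun_sub (by fun_prop) (by fun_prop), deriv_comp_add_const, ← iteratedDeriv_succ]
    simpa [nndist_eq_nnnorm] using hf.lipschitzWith.nndist_le (x + s) x

end LipschitzDeriv

lemma exists_abs_deriv_le_of_lipschitzDeriv (K : ℝ≥0) (n : ℕ) (C : ℝ) : ∃ D : ℝ, ∀ f : ℝ → ℝ,
    LipschitzDeriv K n f → (∀ x, |f x| ≤ C) → ∀ x, |deriv f x| ≤ D := by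
  induction n generalizing C with
  | zero => exact ⟨K, fun f hf _ x => by simpa using hf.abs_iteratedDeriv_succ_le x⟩
  | succ n ih =>
    obtain ⟨D, hD⟩ := ih (C + C)
    refine ⟨D + (C + C), fun f hf hC x => ?_⟩
    have hdiff := hf.differentiable
    obtain ⟨z, hz, hslope⟩ := exists_deriv_eq_slope f (lt_add_one x)
      hdiff.continuous.continuousOn hdiff.differentiableOn
    have increment : |deriv f z - deriv f x| ≤ D := by
      have hs : ‖z - x‖₊ ≤ 1 := by
        rw [← NNReal.coe_le_coe, coe_nnnorm, Real.norm_eq_abs, NNReal.coe_one, abs_le]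
        constructor <;> linarith [hz.1, hz.2]
      have h := hD _ ((hf.comp_add_sub (z - x)).weaken (mul_le_of_le_one_right' hs))
        (fun y => (abs_sub _ _).trans (add_le_add (hC _) (hC _))) x
      rwa [deriv_fun_sub (by fun_prop) (by fun_prop), deriv_comp_add_const,
        add_sub_cancel] at h
    have slope : |deriv f z| ≤ C + C := by
      rw [hslope, add_sub_cancel_left, div_one]
      exact (abs_sub _ _).trans (add_le_add (hC _) (hC _))
    calc |deriv f x| = |deriv f z - (deriv f z - deriv f x)| := by rw [sub_sub_cancel]
      _ ≤ |deriv f z| + |deriv f z - deriv f x| := abs_sub _ _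
      _ ≤ D + (C + C) := by linarith

lemma LipschitzDeriv.exists_rescale_isLUB_abs_deriv {L : ℝ≥0} {n : ℕ} {f : ℝ → ℝ} {C K x : ℝ}
    (hf : LipschitzDeriv L (n + 1) f) (hC : ∀ y, |f y| ≤ C) (hK : 0 < K) (hx : K < |deriv f x|) :
    ∃ g : ℝ → ℝ, LipschitzDeriv L (n + 1) g ∧ (∃ c ∈ Ioo (0 : ℝ) 1, ∀ y, |g y| ≤ c * C) ∧
      IsLUB (range fun y => |deriv g y|) K := by
  obtain ⟨D₀, hD₀⟩ := exists_abs_deriv_le_of_lipschitzDeriv L (n + 1) C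
  set D := ⨆ y, |deriv f y|
  have hD (y : ℝ) : |deriv f y| ≤ D :=
    le_ciSup (f := fun y => |deriv f y|) ⟨D₀, forall_mem_range.2 (hD₀ f hf hC)⟩ y
  obtain ⟨m, hm, hmD⟩ := exists_one_lt_pow_eq ((one_lt_div hK).2 (hx.trans_le (hD x)))
    n.succ_ne_zero
  have hm0 : 0 < m := one_pos.trans hm
  replace hmD : D = K * m ^ (n + 1) := by rw [hmD, mul_div_cancel₀ _ hK.ne']
  have hderiv (y : ℝ) :
      |deriv (fun y => (m ^ (n + 2))⁻¹ * f (m * y)) y| = |deriv f (m * y)| / m ^ (n + 1) := by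
    rw [deriv_const_mul_comp_mul_left, abs_mul, abs_mul, abs_of_pos hm0, abs_of_pos (by positivity)]
    field_simp
    ring
  refine ⟨fun y => (m ^ (n + 2))⁻¹ * f (m * y), hf.rescale ?_, ⟨(m ^ (n + 2))⁻¹,
    ⟨by positivity, inv_lt_one_of_one_lt₀ (one_lt_pow₀ hm (by omega))⟩, fun y => ?_⟩,
    forall_mem_range.2 fun y => ?_, fun b hb => ?_⟩
  · rw [abs_of_pos (by positivity), abs_of_pos hm0]
    field_simp
  · rw [abs_mul, abs_of_pos (by positivity)]
    exact mul_le_mul_of_nonneg_left (hC _) (by positivity)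
  · rw [hderiv, div_le_iff₀ (by positivity), ← hmD]
    exact hD _
  · refine le_of_mul_le_mul_right (hmD ▸ ciSup_le fun y => ?_) (by positivity : 0 < m ^ (n + 1))
    have h := forall_mem_range.1 hb (m⁻¹ * y)
    rwa [hderiv, mul_inv_cancel_left₀ hm0.ne', div_le_iff₀ (by positivity)] at h

lemma lipschitzDeriv_eulerPhi (n : ℕ) : LipschitzDeriv 1 n (eulerPhi (n + 1)) := by
  induction n with
  | zero =>
    refine ⟨contDiff_zero.2 (continuous_eulerPhi_succ 0), .of_dist_le_mul fun x y => ?_⟩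
    rw [iteratedDeriv_zero, dist_comm, dist_comm x, Real.dist_eq, eulerPhi_succ_sub]
    exact intervalIntegral.norm_integral_le_of_norm_le_const (f := eulerPhi 0)
      fun t _ => abs_real_sign_le_one (Real.sin t)
  | succ n ih =>
    refine .of_deriv (fun x => (hasDerivAt_eulerPhi n x).differentiableAt) ?_
    rwa [funext fun x => (hasDerivAt_eulerPhi n x).deriv]

end LipschitzDeriv

section Comparison

/-- The functions normalised for comparison with `eulerSine (n + 1)`: their derivative of order
`n + 1` is bounded by `1`, and their values by the maximum of `eulerSine (n + 1)`. -/
structure EulerDominated (n : ℕ) (f : ℝ → ℝ) : Prop where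
  lipschitzDeriv : LipschitzDeriv 1 n f
  abs_le : ∀ x, |f x| ≤ eulerSine (n + 1) (π / 2)

/-- No dominated function falls from a value of `eulerSine (n + 1)` faster than
`eulerSine (n + 1)` itself does on `[-π/2, π/2]`. -/
def EulerComparison (n : ℕ) : Prop :=
  ∀ ⦃f : ℝ → ℝ⦄, EulerDominated n f → ∀ ⦃ξ η t : ℝ⦄, η ≤ π / 2 → 0 ≤ t → -(π / 2) ≤ η - t →
    eulerSine (n + 1) η ≤ f ξ → eulerSine (n + 1) (η - t) ≤ f (ξ + t)

variable {n : ℕ} {f : ℝ → ℝ} {x y η : ℝ}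

lemma EulerDominated.neg (hf : EulerDominated n f) : EulerDominated n fun x => -f x :=
  ⟨hf.lipschitzDeriv.neg, fun x => by simpa using hf.abs_le x⟩

lemma EulerDominated.comp_neg (hf : EulerDominated n f) : EulerDominated n fun x => f (-x) :=
  ⟨hf.lipschitzDeriv.comp_neg, fun x => hf.abs_le (-x)⟩

lemma eulerComparison_zero : EulerComparison 0 := by
  intro f hf ξ η t hη ht hηt h
  rw [eulerSine_one ⟨by linarith, hη⟩] at h
  rw [eulerSine_one ⟨hηt, by linarith⟩]
  have hlip := hf.lipschitzDeriv.lipschitzWith.dist_le_mul ξ (ξ + t)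
  simp only [iteratedDeriv_zero, Real.dist_eq, NNReal.coe_one, one_mul, sub_add_cancel_left,
    abs_neg, abs_of_nonneg ht] at hlip
  linarith [le_abs_self (f ξ - f (ξ + t))]

namespace EulerComparison

lemma add_le_of_le_deriv (hn : EulerComparison n) (hf : Differentiable ℝ f)
    (hf' : EulerDominated n (deriv f)) (hη : η ∈ Icc 0 (π / 2))
    (hx : eulerSine (n + 1) η ≤ deriv f x) :
    f x + (eulerSine (n + 2) (π / 2) - eulerSine (n + 2) (π / 2 - η)) ≤ f (x + η) := by
  have hderiv (t : ℝ) : HasDerivAt (fun t => f (x + t) + eulerSine (n + 2) (η - π / 2 - t))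
      (deriv f (x + t) - eulerSine (n + 1) (η - t)) t := by
    refine (((hf (x + t)).hasDerivAt.comp_const_add x t).add
      ((hasDerivAt_eulerSine n _).comp_const_sub (η - π / 2) t)).congr_deriv ?_
    ring_nf
  have hmono : MonotoneOn (fun t => f (x + t) + eulerSine (n + 2) (η - π / 2 - t)) (Icc 0 η) := by
    refine monotoneOn_of_deriv_nonneg (convex_Icc 0 η)
      (fun t _ => (hderiv t).continuousAt.continuousWithinAt)
      (fun t _ => (hderiv t).differentiableAt.differentiableWithinAt) fun t ht => ?_
    rw [interior_Icc] at ht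
    rw [(hderiv t).deriv, sub_nonneg]
    exact hn hf' hη.2 ht.1.le (by linarith [ht.2, Real.pi_pos]) hx
  have h := hmono ⟨le_rfl, hη.1⟩ ⟨hη.1, le_rfl⟩ hη.1
  simp only [add_zero, sub_zero] at h
  rw [sub_sub_cancel_left, ← neg_sub, odd_eulerSine, odd_eulerSine] at h
  linarith

lemma add_le_of_le_deriv_left (hn : EulerComparison n) (hf : Differentiable ℝ f)
    (hf' : EulerDominated n (deriv f)) (hη : η ∈ Icc 0 (π / 2))
    (hx : eulerSine (n + 1) η ≤ deriv f x) :
    f (x - η) + (eulerSine (n + 2) (π / 2) - eulerSine (n + 2) (π / 2 - η)) ≤ f x := by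
  have hderiv : deriv (fun y => -f (-y)) = fun y => deriv f (-y) := by
    ext y
    rw [deriv.fun_neg, deriv_comp_neg, neg_neg]
  have h := hn.add_le_of_le_deriv (f := fun y => -f (-y)) (x := -x) (by fun_prop)
    (hderiv ▸ hf'.comp_neg) hη (by simpa [hderiv] using hx)
  simp only [neg_neg, neg_add'] at h
  linarith

/-- A steep slope at `x` forces `f` to rise on one side of `x` and to fall on the other, at least
as much as the Euler spline does before its slope vanishes; so `f x` is far from both bounds. -/
lemma abs_add_le_of_le_abs_deriv (hn : EulerComparison n) (hf : Differentiable ℝ f)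
    (hf' : EulerDominated n (deriv f)) {C : ℝ} (hC : ∀ y, |f y| ≤ C) (hη : η ∈ Icc 0 (π / 2))
    (hx : eulerSine (n + 1) η ≤ |deriv f x|) :
    |f x| + (eulerSine (n + 2) (π / 2) - eulerSine (n + 2) (π / 2 - η)) ≤ C := by
  wlog hpos : 0 ≤ deriv f x generalizing f
  · have hderiv : deriv (fun y => -f y) = fun y => -deriv f y := funext fun y => deriv.fun_neg
    simpa using this (f := fun y => -f y) hf.neg (hderiv ▸ hf'.neg) (by simpa using hC)
      (by simpa [hderiv] using hx) (by rw [hderiv]; linarith)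
  rw [abs_of_nonneg hpos] at hx
  have right := hn.add_le_of_le_deriv hf hf' hη hx
  have left := hn.add_le_of_le_deriv_left hf hf' hη hx
  rw [← le_sub_iff_add_le, abs_le]
  constructor <;> linarith [(abs_le.1 (hC (x + η))).2, (abs_le.1 (hC (x - η))).1]

lemma eulerSine_le_of_isLUB_abs_deriv (hn : EulerComparison n) (hf : LipschitzDeriv 1 (n + 1) f)
    {C : ℝ} (hC : ∀ y, |f y| ≤ C)
    (hsup : IsLUB (range fun y => |deriv f y|) (eulerSine (n + 1) (π / 2))) :
    eulerSine (n + 2) (π / 2) ≤ C := by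
  have hpi := Real.pi_pos
  have hf' : EulerDominated n (deriv f) := ⟨hf.deriv, forall_mem_range.1 hsup.1⟩
  have hlim : Tendsto (fun δ => eulerSine (n + 2) (π / 2) - eulerSine (n + 2) δ) (𝓝[>] 0)
      (𝓝 (eulerSine (n + 2) (π / 2))) := by
    have h := (continuous_const.sub (continuous_eulerSine_succ (n + 1))).tendsto'
      (f := fun δ => eulerSine (n + 2) (π / 2) - eulerSine (n + 2) δ) 0 _
      (by rw [eulerSine_zero_right, sub_zero])
    exact h.mono_left nhdsWithin_le_nhds
  refine le_of_tendsto hlim ?_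
  filter_upwards [Ioo_mem_nhdsGT (show (0 : ℝ) < π / 2 by positivity)] with δ hδ
  have hlt : eulerSine (n + 1) (π / 2 - δ) < eulerSine (n + 1) (π / 2) :=
    strictMonoOn_eulerSine_succ n ⟨by linarith [hδ.2], by linarith [hδ.1]⟩
      ⟨by linarith, le_rfl⟩ (by linarith [hδ.1])
  obtain ⟨-, ⟨x, rfl⟩, hx⟩ := (lt_isLUB_iff hsup).1 hlt
  have h := hn.abs_add_le_of_le_abs_deriv hf.differentiable hf' hC
    ⟨by linarith [hδ.2], by linarith [hδ.1]⟩ hx.le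
  rw [sub_sub_cancel] at h
  linarith [abs_nonneg (f x)]

/-- If the bound failed, the rescaling of `f` whose slopes have exactly this supremum would have
values too small for such slopes. -/
lemma abs_deriv_le (hn : EulerComparison n) (hf : EulerDominated (n + 1) f) (x : ℝ) :
    |deriv f x| ≤ eulerSine (n + 1) (π / 2) := by
  by_contra! hlt
  obtain ⟨g, hg, ⟨c, hc, hgc⟩, hsup⟩ := hf.lipschitzDeriv.exists_rescale_isLUB_abs_deriv hf.abs_le
    (eulerSine_pi_div_two_pos _) hlt
  exact (hn.eulerSine_le_of_isLUB_abs_deriv hg hgc hsup).not_gt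
    (mul_lt_of_lt_one_left (eulerSine_pi_div_two_pos _) hc.2)

lemma eulerDominated_deriv (hn : EulerComparison n) (hf : EulerDominated (n + 1) f) :
    EulerDominated n (deriv f) :=
  ⟨hf.lipschitzDeriv.deriv, hn.abs_deriv_le hf⟩

lemma abs_deriv_le_of_abs_eq (hn : EulerComparison n) (hf : EulerDominated (n + 1) f)
    (hy : y ∈ Icc 0 (π / 2)) (hxy : |f x| = eulerSine (n + 2) y) :
    |deriv f x| ≤ eulerSine (n + 1) (π / 2 - y) := by
  have hpi := Real.pi_pos
  have hf' := hn.eulerDominated_deriv hf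
  obtain ⟨η, hη, hηx⟩ := exists_eulerSine_eq n ⟨abs_nonneg (deriv f x), hf'.abs_le x⟩
  have h := hn.abs_add_le_of_le_abs_deriv hf.lipschitzDeriv.differentiable hf' hf.abs_le hη hηx.le
  have hyη : y ≤ π / 2 - η := by
    rw [← (strictMonoOn_eulerSine_succ (n + 1)).le_iff_le ⟨by linarith [hy.1], hy.2⟩
      ⟨by linarith [hη.2], by linarith [hη.1]⟩]
    linarith
  rw [← hηx]
  exact (strictMonoOn_eulerSine_succ n).monotoneOn ⟨by linarith [hη.1], hη.2⟩
    ⟨by linarith [hy.2], by linarith [hy.1]⟩ (by linarith)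

lemma succ (hn : EulerComparison n) : EulerComparison (n + 1) := by
  intro f hf ξ η t hη ht hηt hξ
  rcases hηt.eq_or_lt with h | h
  · rw [← h, odd_eulerSine]
    exact (abs_le.1 (hf.abs_le _)).1
  refine comp_sub_le_of_neg_le_deriv (hasDerivAt_eulerSine n) (fun y hy => eulerSine_pos _ ?_)
    hf.lipschitzDeriv.differentiable (fun x y hy hxy => ?_) hη ht h hξ
  · constructor <;> linarith [hy.1, hy.2]
  · have hy' : |y| ≤ π / 2 := abs_le.2 ⟨hy.1.le, hy.2.le⟩
    have h := hn.abs_deriv_le_of_abs_eq hf ⟨abs_nonneg y, hy'⟩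
      (by rw [hxy, abs_eulerSine _ hy'])
    rw [eulerSine_pi_div_two_sub_abs] at h
    exact (abs_le.1 h).1

end EulerComparison

theorem eulerComparison (n : ℕ) : EulerComparison n := by
  induction n with
  | zero => exact eulerComparison_zero
  | succ n ih => exact ih.succ

lemma EulerDominated.abs_deriv_le_of_eq_eulerSine (hf : EulerDominated n f)
    (hxy : f x = eulerSine (n + 1) y) : |deriv f x| ≤ |deriv (eulerSine (n + 1)) y| := by
  obtain ⟨z, hz, hval, hderiv⟩ := exists_mem_Icc_eulerSine_eq_abs (n + 1) y
  rw [← hxy] at hval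
  rw [← hderiv]
  cases n with
  | zero =>
    rcases hz.2.eq_or_lt with rfl | hlt
    · rw [deriv_eq_zero_of_forall_abs_le fun w => (hf.abs_le w).trans_eq hval, abs_zero]
      exact abs_nonneg _
    · have hid : eulerSine 1 =ᶠ[𝓝 z] id :=
        eventually_of_mem (Icc_mem_nhds (by linarith [hz.1, Real.pi_pos]) hlt)
          fun _ => eulerSine_one
      simpa [hid.deriv_eq] using hf.lipschitzDeriv.abs_iteratedDeriv_succ_le x
  | succ n =>
    have h := (eulerComparison n).abs_deriv_le_of_abs_eq hf hz hval.symm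
    rw [← abs_of_nonneg hz.1, eulerSine_pi_div_two_sub_abs] at h
    rw [(hasDerivAt_eulerSine n z).deriv]
    exact h.trans (le_abs_self _)

lemma EulerDominated.abs_deriv_le_of_eq_eulerPhi (hf : EulerDominated n f)
    (hxy : f x = eulerPhi (n + 1) y) : |deriv f x| ≤ |deriv (eulerPhi (n + 1)) y| := by
  rw [funext (eulerPhi_eq_eulerSine (n + 1)), deriv_comp_sub_const]
  exact hf.abs_deriv_le_of_eq_eulerSine (hxy.trans (eulerPhi_eq_eulerSine _ _))

end Comparison

section UniformNorm

variable {K : ℝ≥0} {n k : ℕ} {f : ℝ → ℝ}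

lemma abs_iteratedDeriv_le_M {C : ℝ} (hC : ∀ x, |iteratedDeriv k f x| ≤ C) (x : ℝ) :
    |iteratedDeriv k f x| ≤ M k f :=
  le_ciSup (f := fun x => |iteratedDeriv k f x|) ⟨C, forall_mem_range.2 hC⟩ x

lemma M_le {C : ℝ} (hC : ∀ x, |iteratedDeriv k f x| ≤ C) : M k f ≤ C :=
  ciSup_le hC

lemma lipschitzWith_of_abs_deriv_le {C : ℝ≥0} (hf : LipschitzWith K f)
    (hC : ∀ x, |deriv f x| ≤ C) : LipschitzWith C f := by
  refine .of_dist_le_mul fun x y => ?_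
  have hac := (hf.lipschitzOnWith (s := uIcc y x)).absolutelyContinuousOnInterval
  rw [Real.dist_eq, Real.dist_eq, ← hac.integral_deriv_eq_sub]
  exact intervalIntegral.norm_integral_le_of_norm_le_const (f := deriv f) fun t _ => hC t

lemma MemL.lipschitzDeriv (hf : MemL (n + 1) f) (hK : M (n + 1) f ≤ K) :
    LipschitzDeriv K n f := by
  obtain ⟨-, -, hcont, L, hL⟩ := hf
  refine ⟨hcont, lipschitzWith_of_abs_deriv_le hL fun x => ?_⟩
  rw [← iteratedDeriv_succ]
  exact (abs_iteratedDeriv_le_M (LipschitzDeriv.abs_iteratedDeriv_succ_le ⟨hcont, hL⟩) x).trans hK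

lemma MemL.abs_le_M_zero (hf : MemL n f) (x : ℝ) : |f x| ≤ M 0 f := by
  obtain ⟨-, ⟨C, hC⟩, -⟩ := hf
  simpa using abs_iteratedDeriv_le_M (k := 0) (f := f) (by simpa using hC) x

end UniformNorm

section Rescaling

variable {n : ℕ} {K : ℝ≥0} {lam : ℝ}

lemma eulerPhiL_eq (lam : ℝ) (r : ℕ) :
    eulerPhiL lam r = fun t => (lam ^ r)⁻¹ * eulerPhi r (lam * t) := by
  ext t
  rw [eulerPhiL, zpow_neg, zpow_natCast]

lemma M_zero_const_mul_eulerPhiL_le (hlam : 0 < lam) :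
    M 0 (fun t => K * eulerPhiL lam (n + 1) t) ≤
      K * (lam ^ (n + 1))⁻¹ * eulerSine (n + 1) (π / 2) := by
  refine M_le fun t => ?_
  rw [iteratedDeriv_zero, eulerPhiL_eq, ← mul_assoc, abs_mul, abs_of_nonneg (by positivity),
    eulerPhi_eq_eulerSine]
  exact mul_le_mul_of_nonneg_left (abs_eulerSine_le n _) (by positivity)

lemma M_succ_const_mul_eulerPhiL_le (hlam : 0 < lam) :
    M (n + 1) (fun t => K * eulerPhiL lam (n + 1) t) ≤ K := by
  simp only [eulerPhiL_eq, ← mul_assoc]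
  refine M_le ((lipschitzDeriv_eulerPhi n).rescale ?_).abs_iteratedDeriv_succ_le
  rw [abs_of_nonneg (by positivity), abs_of_pos hlam, NNReal.coe_one, one_mul]
  exact inv_mul_cancel_right₀ (by positivity) _

variable {f : ℝ → ℝ} {ξ η : ℝ}

lemma eulerDominated_rescale (hK : 0 < K) (hlam : 0 < lam) (hf : LipschitzDeriv K n f)
    (hf0 : ∀ x, |f x| ≤ K * (lam ^ (n + 1))⁻¹ * eulerSine (n + 1) (π / 2)) :
    EulerDominated n fun x => (K : ℝ)⁻¹ * lam ^ (n + 1) * f (lam⁻¹ * x) where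
  lipschitzDeriv := hf.rescale (by
    rw [abs_of_pos (by positivity), abs_of_pos (by positivity), inv_pow, NNReal.coe_one]
    field_simp)
  abs_le x := by
    rw [abs_mul, abs_of_pos (by positivity)]
    calc (K : ℝ)⁻¹ * lam ^ (n + 1) * |f (lam⁻¹ * x)|
        ≤ (K : ℝ)⁻¹ * lam ^ (n + 1) * (K * (lam ^ (n + 1))⁻¹ * eulerSine (n + 1) (π / 2)) :=
          mul_le_mul_of_nonneg_left (hf0 _) (by positivity)
      _ = eulerSine (n + 1) (π / 2) := by field_simp

lemma LipschitzDeriv.abs_deriv_le_of_eq_mul_eulerPhiL (hf : LipschitzDeriv K n f) (hK : 0 < K)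
    (hlam : 0 < lam) (hf0 : ∀ x, |f x| ≤ K * (lam ^ (n + 1))⁻¹ * eulerSine (n + 1) (π / 2))
    (hξη : f ξ = K * eulerPhiL lam (n + 1) η) :
    |deriv f ξ| ≤ K * |deriv (eulerPhiL lam (n + 1)) η| := by
  have hcontact : (K : ℝ)⁻¹ * lam ^ (n + 1) * f (lam⁻¹ * (lam * ξ)) =
      eulerPhi (n + 1) (lam * η) := by
    rw [inv_mul_cancel_left₀ hlam.ne', hξη, eulerPhiL_eq]
    field_simp
  have hcompare := (eulerDominated_rescale hK hlam hf hf0).abs_deriv_le_of_eq_eulerPhi hcontact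
  rw [deriv_const_mul_comp_mul_left, inv_mul_cancel_left₀ hlam.ne', abs_mul,
    abs_of_pos (by positivity), abs_mul, abs_of_pos (inv_pos.2 hlam)] at hcompare
  rw [eulerPhiL_eq, deriv_const_mul_comp_mul_left, abs_mul, abs_mul, abs_of_pos hlam,
    abs_of_pos (inv_pos.2 (pow_pos hlam _))]
  calc |deriv f ξ| = K * (lam ^ (n + 1))⁻¹ * lam *
        ((K : ℝ)⁻¹ * lam ^ (n + 1) * (lam⁻¹ * |deriv f ξ|)) := by field_simp
    _ ≤ K * (lam ^ (n + 1))⁻¹ * lam * |deriv (eulerPhi (n + 1)) (lam * η)| := by gcongr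
    _ = K * ((lam ^ (n + 1))⁻¹ * (lam * |deriv (eulerPhi (n + 1)) (lam * η)|)) := by ring

end Rescaling

/-- **Kolmogorov's comparison theorem.** -/
theorem stmt3 (r : ℕ) (hr : 0 < r) (f : ℝ → ℝ) (hf : MemL r f) (a lam : ℝ)
    (ha : 0 < a) (hlam : 0 < lam)
    (h0 : M 0 f ≤ M 0 (fun t => a * eulerPhiL lam r t))
    (hrr : M r f ≤ M r (fun t => a * eulerPhiL lam r t))
    (ξ η : ℝ) (heq : f ξ = a * eulerPhiL lam r η) :
    |deriv f ξ| ≤ a * |deriv (eulerPhiL lam r) η| := by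
  obtain ⟨n, rfl⟩ : ∃ n, r = n + 1 := Nat.exists_eq_add_one.2 hr
  lift a to ℝ≥0 using ha.le
  have hlip : LipschitzDeriv a n f :=
    hf.lipschitzDeriv (hrr.trans (M_succ_const_mul_eulerPhiL_le hlam))
  have hbound (x : ℝ) : |f x| ≤ a * (lam ^ (n + 1))⁻¹ * eulerSine (n + 1) (π / 2) :=
    (hf.abs_le_M_zero x).trans (h0.trans (M_zero_const_mul_eulerPhiL_le hlam))
  exact hlip.abs_deriv_le_of_eq_mul_eulerPhiL (NNReal.coe_pos.1 ha) hlam hbound heq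
end
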